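/- Let s be a complex number with Re(s) > 1 and for θ ∈ (0,π) set f_s(θ) := ∑_{n=1}^∞ (sin(nθ)/sin(θ)) · n^{−(s+1)}. Then the square mean value (2/π) ∫₀^π f_s(θ)² sin²(θ) dθ equals ∑_{n=1}^∞ n^{−(2s+2)} = ζ(2s+2). (This is the square moment ∫_{SU(2)} ζ_{SU(2)}(s,g)² dg = ζ_{SU(2)}(2s+2) of the Witten L-function of SU(2).) -/

import Mathlib

open Real

/-- The Witten L-function of SU(2) at the conjugacy class `[θ]`:
`f_s(θ) = ∑_{n≥1} (sin(nθ)/sin θ) n^{-(s+1)}`. -/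
noncomputable def wittenL (s : ℂ) (θ : ℝ) : ℂ :=
  ∑' n : ℕ, ((Real.sin (((n : ℝ) + 1) * θ) / Real.sin θ : ℝ) : ℂ)
    * ((n : ℂ) + 1) ^ (-(s + 1))

/-!
Multiplying `f_s(θ)` by `sin θ` clears the denominators and leaves the sine series with
coefficients `n^{-(s+1)}`. For `Re s > 0` these are absolutely summable, so a product of two such
series may be integrated term by term, and the orthogonality of the functions `sin(nθ)` on `[0, π]`
leaves only the diagonal terms `n^{-(s+1)} n^{-(t+1)} = n^{-(s+t+2)}`.
-/

open MeasureTheory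

section TermwiseIntegration

variable {α ι κ : Type*} [MeasurableSpace α] {μ : Measure α} [IsFiniteMeasure μ] [Countable ι]

theorem hasSum_integral_mul_of_summable_bound [Countable κ] {R : Type*} [NormedRing R]
    [NormedSpace ℝ R] [CompleteSpace R] {f : ι → α → R} {g : κ → α → R} {u : ι → ℝ} {v : κ → ℝ}
    (hf : ∀ i, AEStronglyMeasurable (f i) μ) (hg : ∀ j, AEStronglyMeasurable (g j) μ)
    (hu : Summable u) (hv : Summable v)
    (hfu : ∀ i, ∀ᵐ x ∂μ, ‖f i x‖ ≤ u i) (hgv : ∀ j, ∀ᵐ x ∂μ, ‖g j x‖ ≤ v j) :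
    HasSum (fun p : ι × κ => ∫ x, f p.1 x * g p.2 x ∂μ)
      (∫ x, (∑' i, f i x) * ∑' j, g j x ∂μ) := by
  have huv : Summable fun p : ι × κ => u p.1 * v p.2 :=
    summable_mul_of_summable_norm hu.norm hv.norm
  refine hasSum_integral_of_dominated_convergence (fun p _ => u p.1 * v p.2)
    (fun p => (hf p.1).mul (hg p.2)) (fun p => ?_) (.of_forall fun _ => huv)
    (integrable_const _) ?_
  · filter_upwards [hfu p.1, hgv p.2] with x hfx hgx
    exact norm_mul_le_of_le hfx hgx
  · filter_upwards [ae_all_iff.2 hfu, ae_all_iff.2 hgv] with x hfx hgx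
    have hfs : Summable fun i => ‖f i x‖ := hu.of_nonneg_of_le (fun _ => norm_nonneg _) hfx
    have hgs : Summable fun j => ‖g j x‖ := hv.of_nonneg_of_le (fun _ => norm_nonneg _) hgx
    rw [tsum_mul_tsum_of_summable_norm hfs hgs]
    exact (summable_mul_of_summable_norm hfs hgs).hasSum

theorem hasSum_integral_tsum_mul_tsum_of_pairwise {𝕜 : Type*} [RCLike 𝕜] {e : ι → α → 𝕜} {C : ℝ}
    (he : ∀ i, AEStronglyMeasurable (e i) μ) (hC : ∀ i, ∀ᵐ x ∂μ, ‖e i x‖ ≤ C)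
    (horth : Pairwise fun i j => ∫ x, e i x * e j x ∂μ = 0) {a b : ι → 𝕜}
    (ha : Summable fun i => ‖a i‖) (hb : Summable fun i => ‖b i‖) :
    HasSum (fun i => a i * b i * ∫ x, e i x * e i x ∂μ)
      (∫ x, (∑' i, a i * e i x) * ∑' i, b i * e i x ∂μ) := by
  have hbound (c : ι → 𝕜) (i : ι) : ∀ᵐ x ∂μ, ‖c i * e i x‖ ≤ ‖c i‖ * C := by
    filter_upwards [hC i] with x hx
    exact norm_mul_le_of_le le_rfl hx
  have hdouble := hasSum_integral_mul_of_summable_bound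
    (fun i => (he i).const_mul (a i)) (fun i => (he i).const_mul (b i))
    (ha.mul_right C) (hb.mul_right C) (hbound a) (hbound b)
  have hfactor (p : ι × ι) : ∫ x, a p.1 * e p.1 x * (b p.2 * e p.2 x) ∂μ =
      a p.1 * b p.2 * ∫ x, e p.1 x * e p.2 x ∂μ := by
    rw [← integral_const_mul]
    exact integral_congr_ae (.of_forall fun x => mul_mul_mul_comm _ _ _ _)
  simp only [hfactor] at hdouble
  refine (Function.diag_injective.hasSum_iff fun p hp => ?_).2 hdouble
  have hne : p.1 ≠ p.2 := fun h => hp ⟨p.1, Prod.ext rfl h⟩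
  rw [horth hne, mul_zero]

end TermwiseIntegration

section SineSeries

theorem integral_cos_int_mul (k : ℤ) :
    ∫ θ in (0 : ℝ)..π, Real.cos (k * θ) = if k = 0 then π else 0 := by
  split_ifs with hk
  · simp [hk]
  · rw [intervalIntegral.integral_comp_mul_left Real.cos (Int.cast_ne_zero.2 hk)]
    simp [Real.sin_int_mul_pi]

theorem integral_sin_nat_mul_mul_sin_nat_mul {m : ℕ} (hm : m ≠ 0) (n : ℕ) :
    ∫ θ in (0 : ℝ)..π, Real.sin (m * θ) * Real.sin (n * θ) = if m = n then π / 2 else 0 := by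
  have product_to_sum (θ : ℝ) : Real.sin (m * θ) * Real.sin (n * θ) =
      (Real.cos ((m - n : ℤ) * θ) - Real.cos ((m + n : ℤ) * θ)) / 2 := by
    push_cast
    rw [sub_mul, add_mul, Real.cos_sub, Real.cos_add]
    ring
  have hcos (k : ℤ) : IntervalIntegrable (fun θ : ℝ => Real.cos (k * θ)) volume 0 π :=
    Continuous.intervalIntegrable (by fun_prop) _ _
  simp_rw [product_to_sum]
  rw [intervalIntegral.integral_div, intervalIntegral.integral_sub (hcos _) (hcos _),
    integral_cos_int_mul, integral_cos_int_mul, if_neg (by omega : (m + n : ℤ) ≠ 0), sub_zero]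
  simp only [sub_eq_zero, Nat.cast_inj, ite_div, zero_div]

theorem integral_ofReal_sin_succ_mul_mul (m n : ℕ) :
    ∫ θ in (0 : ℝ)..π,
        (Real.sin (((m : ℝ) + 1) * θ) : ℂ) * (Real.sin (((n : ℝ) + 1) * θ) : ℂ) =
      if m = n then (π / 2 : ℂ) else 0 := by
  have h := integral_sin_nat_mul_mul_sin_nat_mul m.succ_ne_zero (n + 1)
  simp only [Nat.cast_succ, Nat.succ_inj] at h
  simp_rw [← Complex.ofReal_mul]
  rw [intervalIntegral.integral_ofReal, h]
  split_ifs <;> simp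

theorem integral_tsum_sin_mul_tsum_sin {a b : ℕ → ℂ}
    (ha : Summable fun n => ‖a n‖) (hb : Summable fun n => ‖b n‖) :
    ∫ θ in (0 : ℝ)..π, (∑' n : ℕ, a n * (Real.sin (((n : ℝ) + 1) * θ) : ℂ)) *
        ∑' n : ℕ, b n * (Real.sin (((n : ℝ) + 1) * θ) : ℂ) =
      (π / 2 : ℂ) * ∑' n : ℕ, a n * b n := by
  have horth := integral_ofReal_sin_succ_mul_mul
  simp only [intervalIntegral.integral_of_le pi_pos.le] at horth ⊢
  have hsum := hasSum_integral_tsum_mul_tsum_of_pairwise (C := 1)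
    (e := fun (n : ℕ) θ => (Real.sin (((n : ℝ) + 1) * θ) : ℂ))
    (fun n => Continuous.aestronglyMeasurable (by fun_prop))
    (fun n => .of_forall fun θ => (Complex.norm_real _).trans_le (Real.abs_sin_le_one _))
    (fun m n hmn => (horth m n).trans (if_neg hmn)) ha hb
  simp only [horth, if_true] at hsum
  rw [← hsum.tsum_eq, tsum_mul_right, mul_comm]

end SineSeries

section WittenL

theorem summable_norm_nat_add_one_cpow_neg {w : ℂ} (hw : 1 < w.re) :
    Summable fun n : ℕ => ‖((n : ℂ) + 1) ^ (-w)‖ := by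
  have h := (summable_nat_add_iff 1).2 (Complex.summable_one_div_nat_cpow.2 hw)
  simpa only [Complex.cpow_neg, one_div, Nat.cast_add_one] using h.norm

theorem tsum_nat_add_one_cpow_neg_eq_riemannZeta {w : ℂ} (hw : 1 < w.re) :
    ∑' n : ℕ, ((n : ℂ) + 1) ^ (-w) = riemannZeta w := by
  simp only [zeta_eq_tsum_one_div_nat_add_one_cpow hw, Complex.cpow_neg, one_div]

theorem wittenL_mul_sin (s : ℂ) {θ : ℝ} (hθ : Real.sin θ ≠ 0) :
    wittenL s θ * (Real.sin θ : ℂ) =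
      ∑' n : ℕ, ((n : ℂ) + 1) ^ (-(s + 1)) * (Real.sin (((n : ℝ) + 1) * θ) : ℂ) := by
  rw [wittenL, ← tsum_mul_right]
  refine tsum_congr fun n => ?_
  rw [mul_right_comm, ← Complex.ofReal_mul, div_mul_cancel₀ _ hθ, mul_comm]

theorem integral_wittenL_mul_wittenL {s t : ℂ} (hs : 0 < s.re) (ht : 0 < t.re) :
    ∫ θ in (0 : ℝ)..π, wittenL s θ * wittenL t θ * (Real.sin θ : ℂ) ^ 2 =
      (π / 2 : ℂ) * ∑' n : ℕ, ((n : ℂ) + 1) ^ (-(s + t + 2)) := by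
  have hsummable {w : ℂ} (hw : 0 < w.re) :
      Summable fun n : ℕ => ‖((n : ℂ) + 1) ^ (-(w + 1))‖ :=
    summable_norm_nat_add_one_cpow_neg (by simpa using hw)
  have hpow (n : ℕ) : ((n : ℂ) + 1) ^ (-(s + t + 2)) =
      ((n : ℂ) + 1) ^ (-(s + 1)) * ((n : ℂ) + 1) ^ (-(t + 1)) := by
    rw [← Complex.cpow_add _ _ (Nat.cast_add_one_ne_zero n)]
    ring_nf
  rw [tsum_congr hpow, ← integral_tsum_sin_mul_tsum_sin (hsummable hs) (hsummable ht)]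
  refine intervalIntegral.integral_congr_uIoo fun θ hθ => ?_
  rw [Set.uIoo_of_le pi_pos.le] at hθ
  have hsin : Real.sin θ ≠ 0 := (Real.sin_pos_of_mem_Ioo hθ).ne'
  rw [← wittenL_mul_sin s hsin, ← wittenL_mul_sin t hsin]
  ring

end WittenL

theorem square_moment_general {s t : ℂ} (hs : 0 < s.re) (ht : 0 < t.re) :
    (2 / (π : ℂ)) * ∫ θ in (0 : ℝ)..π, wittenL s θ * wittenL t θ * (Real.sin θ : ℂ) ^ 2
        = ∑' n : ℕ, ((n : ℂ) + 1) ^ (-(s + t + 2)) ∧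
    (∑' n : ℕ, ((n : ℂ) + 1) ^ (-(s + t + 2))) = riemannZeta (s + t + 2) := by
  have hpi : (π : ℂ) ≠ 0 := Complex.ofReal_ne_zero.2 pi_ne_zero
  refine ⟨?_, tsum_nat_add_one_cpow_neg_eq_riemannZeta ?_⟩
  · rw [integral_wittenL_mul_wittenL hs ht]
    field_simp
  · simp only [Complex.add_re, Complex.re_ofNat]
    linarith

/-- The square moment of the Witten L-function of SU(2): for `Re(s) > 1`,
`(2/π) ∫₀^π f_s(θ)² sin²θ dθ = ∑_{n≥1} n^{-(2s+2)} = ζ(2s+2)`. -/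
theorem square_moment (s : ℂ) (hs : 1 < s.re) :
    (2 / (π : ℂ)) * ∫ θ in (0:ℝ)..π, (wittenL s θ) ^ 2 * ((Real.sin θ : ℂ)) ^ 2
        = ∑' n : ℕ, ((n : ℂ) + 1) ^ (-(2 * s + 2)) ∧
    (∑' n : ℕ, ((n : ℂ) + 1) ^ (-(2 * s + 2))) = riemannZeta (2 * s + 2) := by
  have hs₀ : 0 < s.re := one_pos.trans hs
  simpa only [two_mul, sq] using square_moment_general hs₀ hs₀
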